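/- Let a, b : ℝ² → ℝ² be continuously differentiable vector fields with compact support. Then the Newton-linearized EMAC trilinear term tested with b satisfies b_emac(a,b,b) + b_emac(b,a,b) − b_emac(a,a,b) = −b_emac(b−a, b−a, b). -/

import Mathlib

open MeasureTheory RealInnerProductSpace

noncomputable section

abbrev E2 := EuclideanSpace ℝ (Fin 2)

/-- divergence of a vector field on ℝ² -/
def dvg (u : E2 → E2) (x : E2) : ℝ :=
  ∑ i, fderiv ℝ u x (EuclideanSpace.single i 1) i

/-- convective trilinear form  b_conv(u,v,w) = ∫ ((u·∇)v)·w -/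
def bConv (u v w : E2 → E2) : ℝ :=
  ∫ x, ⟪fderiv ℝ v x (u x), w x⟫

/-- EMAC trilinear form  b_emac(u,v,w) = ∫ (2D(u)v)·w + (∇·u)(v·w),
where (2D(u)v)·w = (∇u v)·w + (∇u w)·v. -/
def bEmac (u v w : E2 → E2) : ℝ :=
  ∫ x, (⟪fderiv ℝ u x (v x), w x⟫ + ⟪fderiv ℝ u x (w x), v x⟫
    + dvg u x * ⟪v x, w x⟫)

/-- L² norm -/
def l2Norm {F : Type*} [NormedAddCommGroup F] (f : E2 → F) : ℝ :=
  (∫ x, ‖f x‖ ^ 2) ^ ((1 : ℝ) / 2)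

/-- H¹ norm -/
def h1Norm (f : E2 → E2) : ℝ := l2Norm f + l2Norm (fderiv ℝ f)

/-- H² norm -/
def h2Norm (f : E2 → E2) : ℝ :=
  l2Norm f + l2Norm (fderiv ℝ f) + l2Norm (fderiv ℝ (fderiv ℝ f))

/-- rotational field φ(x₁,x₂) = (−x₂, x₁) -/
def phi : E2 → E2 := fun x => (WithLp.equiv 2 (Fin 2 → ℝ)).symm ![-x 1, x 0]

/-!
Write `r = b - a`. Trilinearity of the EMAC form `c` gives
`c(a, b, w) + c(b, a, w) - c(a, a, w) = c(b, b, w) - c(r, r, w)` for every test field `w`, and for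
`w = b` the first term on the right vanishes: the integrand of `c(b, b, b)` is
`2 ⟪Db(b), b⟫ + (div b) ‖b‖² = div (‖b‖² b)`, the divergence of a compactly supported field.
-/

section Divergence

variable {E F : Type*} [NormedAddCommGroup E] [NormedSpace ℝ E]
  [NormedAddCommGroup F] [NormedSpace ℝ F]

/-- The divergence of a vector field on a real normed space, encoded as the trace of its Fréchet
derivative so that it refers to no basis. It takes the junk value `0` in infinite dimension and at
points where the field is not differentiable. -/
def divergence (u : E → E) (x : E) : ℝ :=
  LinearMap.trace ℝ E (fderiv ℝ u x)

theorem dvg_eq_divergence (u : E2 → E2) : dvg u = divergence u := by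
  ext x
  simp [dvg, divergence, LinearMap.trace_eq_sum_inner _ (EuclideanSpace.basisFun (Fin 2) ℝ),
    EuclideanSpace.inner_single_left]

theorem divergence_sub {u v : E → E} {x : E} (hu : DifferentiableAt ℝ u x)
    (hv : DifferentiableAt ℝ v x) :
    divergence (u - v) x = divergence u x - divergence v x := by
  simp [divergence, fderiv_sub hu hv]

variable [FiniteDimensional ℝ E]

theorem divergence_smul {f : E → ℝ} {u : E → E} {x : E} (hf : DifferentiableAt ℝ f x)
    (hu : DifferentiableAt ℝ u x) :
    divergence (f • u) x = f x * divergence u x + fderiv ℝ f x (u x) := by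
  simp [divergence, fderiv_smul hf hu]

theorem continuous_divergence {u : E → E} (hu : ContDiff ℝ 1 u) : Continuous (divergence u) :=
  (LinearMap.trace ℝ E ∘ₗ ContinuousLinearMap.coeLM ℝ).continuous_of_finiteDimensional.comp
    (hu.continuous_fderiv one_ne_zero)

variable [MeasurableSpace E] [BorelSpace E] {μ : Measure E} [μ.IsAddHaarMeasure]

theorem integral_fderiv_eq_zero {f : E → F} (hf : Differentiable ℝ f) (hfi : Integrable f μ)
    (hf' : Integrable (fderiv ℝ f) μ) : ∫ x, fderiv ℝ f x ∂μ = 0 := by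
  ext v
  have hfv : Integrable (fun x ↦ fderiv ℝ f x v) μ := hf'.apply_continuousLinearMap v
  rw [ContinuousLinearMap.integral_apply hf']
  simpa using integral_smul_fderiv_eq_neg_fderiv_smul_of_integrable (μ := μ) (𝕜 := ℝ)
    (f := fun _ ↦ (1 : ℝ)) (g := f) (v := v) (by simp) (by simpa using hfv) (by simpa using hfi)
    (by fun_prop) (fun x _ ↦ hf x)

theorem integral_divergence_eq_zero {u : E → E} (hu : Differentiable ℝ u) (hui : Integrable u μ)
    (hu' : Integrable (fderiv ℝ u) μ) : ∫ x, divergence u x ∂μ = 0 := by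
  let traceCLM : (E →L[ℝ] E) →L[ℝ] ℝ :=
    (LinearMap.trace ℝ E ∘ₗ ContinuousLinearMap.coeLM ℝ).toContinuousLinearMap
  calc ∫ x, divergence u x ∂μ = traceCLM (∫ x, fderiv ℝ u x ∂μ) :=
        traceCLM.integral_comp_comm hu'
    _ = 0 := by rw [integral_fderiv_eq_zero hu hui hu', map_zero]

end Divergence

section Emac

variable {E : Type*} [NormedAddCommGroup E] [InnerProductSpace ℝ E]

/-- The integrand `(2 D(u) v) · w + (∇ · u) (v · w)` of the EMAC form on a real inner product space,
the symmetric gradient being expanded as `(2 D(u) v) · w = ⟪Du(v), w⟫ + ⟪Du(w), v⟫`. -/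
def emacIntegrand (u v w : E → E) (x : E) : ℝ :=
  ⟪fderiv ℝ u x (v x), w x⟫ + ⟪fderiv ℝ u x (w x), v x⟫ + divergence u x * ⟪v x, w x⟫

theorem emacIntegrand_sub_left {u₁ u₂ : E → E} (hu₁ : Differentiable ℝ u₁)
    (hu₂ : Differentiable ℝ u₂) (v w : E → E) :
    emacIntegrand (u₁ - u₂) v w = emacIntegrand u₁ v w - emacIntegrand u₂ v w := by
  ext x
  simp only [emacIntegrand, divergence_sub (hu₁ x) (hu₂ x), fderiv_sub (hu₁ x) (hu₂ x),
    sub_apply, inner_sub_left, Pi.sub_apply]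
  ring

theorem emacIntegrand_sub_middle (u v₁ v₂ w : E → E) :
    emacIntegrand u (v₁ - v₂) w = emacIntegrand u v₁ w - emacIntegrand u v₂ w := by
  ext x
  simp only [emacIntegrand, Pi.sub_apply, map_sub, inner_sub_left, inner_sub_right]
  ring

/-- The EMAC trilinear form on a real inner product space, integrated against an arbitrary
measure `μ`; `bEmac` is the case of Lebesgue measure on the plane. -/
def emacForm [MeasurableSpace E] (μ : Measure E) (u v w : E → E) : ℝ :=
  ∫ x, emacIntegrand u v w x ∂μ

theorem bEmac_eq_emacForm (u v w : E2 → E2) : bEmac u v w = emacForm volume u v w := by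
  simp only [bEmac, emacForm, emacIntegrand, dvg_eq_divergence]

variable [FiniteDimensional ℝ E]

theorem emacIntegrand_self_eq_divergence {u : E → E} (hu : Differentiable ℝ u) :
    emacIntegrand u u u = divergence ((fun x ↦ ‖u x‖ ^ 2) • u) := by
  ext x
  have fderiv_normSq : fderiv ℝ (fun y ↦ ‖u y‖ ^ 2) x (u x) = 2 * ⟪fderiv ℝ u x (u x), u x⟫ := by
    simp [(hu x).hasFDerivAt.norm_sq.fderiv, real_inner_comm]
  rw [divergence_smul ((hu x).norm_sq ℝ) (hu x), fderiv_normSq, emacIntegrand,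
    real_inner_self_eq_norm_sq]
  ring

variable [MeasurableSpace E] [BorelSpace E] {μ : Measure E}

theorem integrable_emacIntegrand [IsFiniteMeasureOnCompacts μ] {u v w : E → E}
    (hu : ContDiff ℝ 1 u) (hv : Continuous v) (hw : Continuous w) (hcw : HasCompactSupport w) :
    Integrable (emacIntegrand u v w) μ := by
  have hdiv : Continuous (divergence u) := continuous_divergence hu
  refine Continuous.integrable_of_hasCompactSupport (by unfold emacIntegrand; fun_prop) ?_
  refine hcw.mono fun x hx hwx ↦ hx ?_
  simp [emacIntegrand, hwx]

theorem emacForm_sub_left [IsFiniteMeasureOnCompacts μ] {u₁ u₂ v w : E → E}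
    (hu₁ : ContDiff ℝ 1 u₁) (hu₂ : ContDiff ℝ 1 u₂) (hv : Continuous v) (hw : Continuous w)
    (hcw : HasCompactSupport w) :
    emacForm μ (u₁ - u₂) v w = emacForm μ u₁ v w - emacForm μ u₂ v w := by
  unfold emacForm
  rw [emacIntegrand_sub_left (hu₁.differentiable one_ne_zero) (hu₂.differentiable one_ne_zero)]
  exact integral_sub' (integrable_emacIntegrand hu₁ hv hw hcw)
    (integrable_emacIntegrand hu₂ hv hw hcw)

theorem emacForm_sub_middle [IsFiniteMeasureOnCompacts μ] {u v₁ v₂ w : E → E}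
    (hu : ContDiff ℝ 1 u) (hv₁ : Continuous v₁) (hv₂ : Continuous v₂) (hw : Continuous w)
    (hcw : HasCompactSupport w) :
    emacForm μ u (v₁ - v₂) w = emacForm μ u v₁ w - emacForm μ u v₂ w := by
  unfold emacForm
  rw [emacIntegrand_sub_middle]
  exact integral_sub' (integrable_emacIntegrand hu hv₁ hw hcw)
    (integrable_emacIntegrand hu hv₂ hw hcw)

theorem emacForm_newton_eq_sub [IsFiniteMeasureOnCompacts μ] {a b w : E → E}
    (ha : ContDiff ℝ 1 a) (hb : ContDiff ℝ 1 b) (hw : Continuous w) (hcw : HasCompactSupport w) :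
    emacForm μ a b w + emacForm μ b a w - emacForm μ a a w =
      emacForm μ b b w - emacForm μ (b - a) (b - a) w := by
  rw [emacForm_sub_left hb ha (hb.continuous.sub ha.continuous) hw hcw,
    emacForm_sub_middle hb hb.continuous ha.continuous hw hcw,
    emacForm_sub_middle ha hb.continuous ha.continuous hw hcw]
  ring

variable [μ.IsAddHaarMeasure]

theorem emacForm_self_eq_zero {u : E → E} (hu : ContDiff ℝ 1 u) (hcu : HasCompactSupport u) :
    emacForm μ u u u = 0 := by
  have hflux : ContDiff ℝ 1 ((fun x ↦ ‖u x‖ ^ 2) • u) := (hu.norm_sq ℝ).smul hu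
  have hcflux : HasCompactSupport ((fun x ↦ ‖u x‖ ^ 2) • u) := hcu.smul_left
  rw [emacForm, emacIntegrand_self_eq_divergence (hu.differentiable one_ne_zero)]
  exact integral_divergence_eq_zero (hflux.differentiable one_ne_zero)
    (hflux.continuous.integrable_of_hasCompactSupport hcflux)
    ((hflux.continuous_fderiv one_ne_zero).integrable_of_hasCompactSupport (hcflux.fderiv ℝ))

theorem newton_emac_energy_identity_general {a b : E → E} (ha : ContDiff ℝ 1 a)
    (hb : ContDiff ℝ 1 b) (hcb : HasCompactSupport b) :
    emacForm μ a b b + emacForm μ b a b - emacForm μ a a b = -emacForm μ (b - a) (b - a) b := by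
  rw [emacForm_newton_eq_sub ha hb hb.continuous hcb, emacForm_self_eq_zero hb hcb, zero_sub]

end Emac

theorem newton_emac_energy_identity
    (a b : E2 → E2)
    (ha : ContDiff ℝ 1 a) (hb : ContDiff ℝ 1 b)
    (hca : HasCompactSupport a) (hcb : HasCompactSupport b) :
    bEmac a b b + bEmac b a b - bEmac a a b
      = -bEmac (fun x => b x - a x) (fun x => b x - a x) b := by
  simpa only [bEmac_eq_emacForm, Pi.sub_def] using
    newton_emac_energy_identity_general (μ := volume) ha hb hcb
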